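/- Let Λ be an Iwanaga–Gorenstein finite-dimensional algebra over an algebraically closed field K, i.e., Λ has finite self-injective dimension both as a right and as a left Λ-module. Then the stable category of the category of Cohen–Macaulay Λ-modules admits no non-zero silting object. -/

import Mathlib

/- Formalization of statements from
   "Report on the finiteness of silting objects"
   by T. Aihara, T. Honma, K. Miyamoto, Q. Wang. -/

open CategoryTheory CategoryTheory.Limits

universe u v w

noncomputable section
namespace PaperSilting
/-! ### Silting theory in triangulated categories. -/

open Pretriangulated

section Triangulated

variable {C : Type u} [Category.{v} C] [Preadditive C] [HasZeroObject C] [HasShift C ℤ]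
  [∀ n : ℤ, (shiftFunctor C n).Additive] [Pretriangulated C]

/-- A class of objects of a triangulated category is thick: it is closed under
isomorphisms, shifts, cones and direct summands (retracts). -/
structure IsThickClass (P : C → Prop) : Prop where
  iso : ∀ {X Y : C}, (X ≅ Y) → P X → P Y
  shift : ∀ (X : C) (n : ℤ), P X → P (X⟦n⟧)
  cone : ∀ T ∈ distTriang C, P T.obj₁ → P T.obj₂ → P T.obj₃
  retract : ∀ (X Y : C) (i : X ⟶ Y) (r : Y ⟶ X), i ≫ r = 𝟙 X → P Y → P X

/-- `X` belongs to the smallest thick subcategory containing `S`. -/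
def InThick (S : Set C) (X : C) : Prop :=
  ∀ P : C → Prop, IsThickClass P → (∀ Y ∈ S, P Y) → P X

/-- A presilting object: `Hom(M, M[n]) = 0` for all `n > 0`. -/
def IsPresiltingObj (M : C) : Prop := ∀ n : ℤ, 0 < n → ∀ f : M ⟶ M⟦n⟧, f = 0

/-- A pretilting object: `Hom(M, M[n]) = 0` for all `n ≠ 0`. -/
def IsPretiltingObj (M : C) : Prop := ∀ n : ℤ, n ≠ 0 → ∀ f : M ⟶ M⟦n⟧, f = 0

/-- A silting object of the triangulated category `C`. -/
def IsSiltingObj (M : C) : Prop := IsPresiltingObj M ∧ ∀ X : C, InThick {M} X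

/-- A silting object of the thick subcategory of `C` determined by the class `S`. -/
def IsSiltingFor (S : C → Prop) (M : C) : Prop :=
  S M ∧ IsPresiltingObj M ∧ ∀ X : C, S X → InThick {M} X

/-- A tilting object of the thick subcategory of `C` determined by the class `S`. -/
def IsTiltingFor (S : C → Prop) (M : C) : Prop :=
  S M ∧ IsPretiltingObj M ∧ ∀ X : C, S X → InThick {M} X

/-- A basic object: it has no direct summand of the form `Y ⊕ Y` with `Y ≠ 0`. -/
def IsBasicObj (M : C) : Prop :=
  ∀ (Y : C) (i₁ i₂ : Y ⟶ M) (p₁ p₂ : M ⟶ Y),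
    i₁ ≫ p₁ = 𝟙 Y → i₂ ≫ p₂ = 𝟙 Y → i₁ ≫ p₂ = 0 → i₂ ≫ p₁ = 0 → IsZero Y

end Triangulated

/-! ### The homotopy category of complexes of modules; perfect complexes. -/

/-- The homotopy category of (unbounded) cochain complexes of `R`-modules.
Its full subcategory of bounded complexes of finitely generated projectives is
`K^b(proj R)`, and its full subcategory of right-bounded complexes of finitely
generated projectives with bounded cohomology is a model for `D^b(mod R)`. -/
abbrev HtpyCat (R : Type) [Ring R] :=
  HomotopyCategory (ModuleCat.{0} R) (ComplexShape.up ℤ)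

/-- The object of the homotopy category attached to a complex. -/
def ofComplex (R : Type) [Ring R] (P : CochainComplex (ModuleCat.{0} R) ℤ) : HtpyCat R :=
  (HomotopyCategory.quotient _ _).obj P

/-- A perfect object: isomorphic to a bounded complex of finitely generated
projective modules.  These are the objects of `K^b(proj R)`. -/
def IsPerfObj (R : Type) [Ring R] (X : HtpyCat R) : Prop :=
  ∃ P : CochainComplex (ModuleCat.{0} R) ℤ,
    (∀ i, Projective (P.X i) ∧ Module.Finite R (P.X i)) ∧
    (∃ a b : ℤ, ∀ i, i < a ∨ b < i → IsZero (P.X i)) ∧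
    Nonempty (X ≅ ofComplex R P)

/-- An object of (the standard model `K^{-,b}(proj R)` of) the bounded derived
category `D^b(mod R)`: isomorphic to a right-bounded complex of finitely
generated projective modules with bounded cohomology. -/
def IsDbObj (R : Type) [Ring R] (X : HtpyCat R) : Prop :=
  ∃ P : CochainComplex (ModuleCat.{0} R) ℤ,
    (∀ i, Projective (P.X i) ∧ Module.Finite R (P.X i)) ∧
    (∃ b : ℤ, ∀ i, b < i → IsZero (P.X i)) ∧
    (∃ a : ℤ, ∀ i, i < a → P.ExactAt i) ∧
    Nonempty (X ≅ ofComplex R P)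

/-- An object of the homotopy category presented by a complex of finitely
generated projectives concentrated in the `m` degrees `-m < i ≤ 0`. -/
def IsMTermObj (R : Type) [Ring R] (m : ℕ) (X : HtpyCat R) : Prop :=
  ∃ P : CochainComplex (ModuleCat.{0} R) ℤ,
    (∀ i, Projective (P.X i) ∧ Module.Finite R (P.X i)) ∧
    (∀ i : ℤ, 0 < i ∨ i ≤ -(m : ℤ) → IsZero (P.X i)) ∧
    Nonempty (X ≅ ofComplex R P)

/-- The stalk complex of the regular module `R`, placed in degree `0`. -/
def stalkRing (R : Type) [Ring R] : HtpyCat R :=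
  ofComplex R
    ((HomologicalComplex.single (ModuleCat.{0} R) (ComplexShape.up ℤ) 0).obj (ModuleCat.of R R))

/-- The regular module `R` has finite injective dimension: it admits a finite
injective coresolution. -/
def HasFiniteSelfInjDim (R : Type) [Ring R] : Prop :=
  ∃ (n : ℕ) (I : CochainComplex (ModuleCat.{0} R) ℤ)
    (φ : (HomologicalComplex.single (ModuleCat.{0} R) (ComplexShape.up ℤ) 0).obj
          (ModuleCat.of R R) ⟶ I),
    (∀ i, Injective (I.X i)) ∧ (∀ i : ℤ, i < 0 ∨ (n : ℤ) < i → IsZero (I.X i)) ∧ QuasiIso φ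

/-- For a selfinjective (more generally Iwanaga–Gorenstein) ring, the stable
category of Cohen–Macaulay modules is modelled by acyclic (equivalently,
totally acyclic) complexes of finitely generated projectives (Buchweitz). -/
def IsCMStableObj (R : Type) [Ring R] (X : HtpyCat R) : Prop :=
  ∃ P : CochainComplex (ModuleCat.{0} R) ℤ,
    (∀ i, Projective (P.X i) ∧ Module.Finite R (P.X i)) ∧
    (∀ i, P.ExactAt i) ∧ Nonempty (X ≅ ofComplex R P)

/-- `R` is tilting-discrete: for every `m > 0` there are only finitely many
basic `m`-term tilting objects in `K^b(proj R)` up to isomorphism. -/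
def IsTiltingDiscreteRing (R : Type) [Ring R] : Prop :=
  ∀ m : ℕ, 0 < m → ∃ (k : ℕ) (f : Fin k → HtpyCat R),
    ∀ X : HtpyCat R, IsTiltingFor (IsPerfObj R) X → IsMTermObj R m X → IsBasicObj X →
      ∃ i, Nonempty (X ≅ f i)

/-- A (selfinjective) algebra `Λ` is tilting-discrete (with respect to right modules). -/
def IsTiltingDiscrete (Λ : Type) [Ring Λ] : Prop := IsTiltingDiscreteRing Λᵐᵒᵖ

/-! If `X` is silting, then every object `Y` satisfies `Hom(X, Y[n]) = 0` for all large `n`, because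
such `Y` form a thick class containing `X`. Represent `X` by an acyclic complex `Q` of projectives,
with cycle modules `Zⁱ`. As `Λ` has finite left self-injective dimension, Cohen–Macaulay modules are
reflexive, so each of them is a cycle module of an acyclic complex `Y` of free modules; vanishing of
`Hom(X, Y[n])` then says that `Ext¹(Zⁱ, V) = 0` for `i ≪ 0` whenever `V` is Cohen–Macaulay.

As `Λ` has finite right self-injective dimension, high syzygies are Cohen–Macaulay, and
`Ext¹(Zⁱ, ΩV) = 0` implies `Ext¹(Zⁱ⁺¹, V) = 0`. So the vanishing for `i ≪ 0` holds for every
finitely generated `V`. The case `V = Λ / rad Λ` provides a degree that works for all modules of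
finite length at once, and then all higher degrees work too. Hence the sequences
`0 ⟶ Zⁱ ⟶ Qⁱ ⟶ Zⁱ⁺¹ ⟶ 0` split, and `Q` is contractible. -/

section EventuallyOrthogonal

variable {C : Type u} [Category.{v} C] [Preadditive C] [HasZeroObject C] [HasShift C ℤ]
  [∀ n : ℤ, (shiftFunctor C n).Additive] [Pretriangulated C]

/-- `Y` is eventually right orthogonal to `M`: `Hom(M, Y[n]) = 0` for all large `n`. -/
def EventuallyOrthogonal (M Y : C) : Prop :=
  ∃ N : ℤ, ∀ n, N ≤ n → ∀ f : M ⟶ Y⟦n⟧, f = 0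

lemma isThickClass_eventuallyOrthogonal (M : C) : IsThickClass (EventuallyOrthogonal M) where
  iso := by
    rintro X Y e ⟨N, hN⟩
    refine ⟨N, fun n hn f ↦ ?_⟩
    rw [← cancel_mono (e.inv⟦n⟧'), hN n hn (f ≫ e.inv⟦n⟧'), zero_comp]
  shift := by
    rintro X k ⟨N, hN⟩
    refine ⟨N - k, fun n hn f ↦ ?_⟩
    rw [← cancel_mono ((shiftFunctorAdd C k n).inv.app X), zero_comp]
    exact hN (k + n) (by lia) (f ≫ (shiftFunctorAdd C k n).inv.app X)
  cone := by
    rintro T hT ⟨N₁, h₁⟩ ⟨N₂, h₂⟩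
    refine ⟨max N₁ N₂, fun n hn f ↦ ?_⟩
    have hshift (g : M ⟶ (T.obj₁⟦n⟧)⟦(1 : ℤ)⟧) : g = 0 := by
      rw [← cancel_mono ((shiftFunctorAdd C n 1).inv.app T.obj₁), zero_comp]
      exact h₁ (n + 1) (by lia) (g ≫ (shiftFunctorAdd C n 1).inv.app T.obj₁)
    obtain ⟨g, rfl⟩ := Triangle.coyoneda_exact₃ _ (Triangle.shift_distinguished T hT n) f
      (hshift _)
    rw [h₂ n (by lia) g]
    exact zero_comp
  retract := by
    rintro X Y i r hir ⟨N, hN⟩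
    refine ⟨N, fun n hn f ↦ ?_⟩
    calc f = (f ≫ i⟦n⟧') ≫ r⟦n⟧' := by
          rw [Category.assoc, ← Functor.map_comp, hir, CategoryTheory.Functor.map_id,
            Category.comp_id]
      _ = 0 := by rw [hN n hn (f ≫ i⟦n⟧'), zero_comp]

lemma IsPresiltingObj.eventuallyOrthogonal_of_inThick {M X : C} (hM : IsPresiltingObj M)
    (hX : InThick {M} X) : EventuallyOrthogonal M X := by
  refine hX _ (isThickClass_eventuallyOrthogonal M) ?_
  rintro _ rfl
  exact ⟨1, fun n hn ↦ hM n (by lia)⟩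

end EventuallyOrthogonal

section DimensionShifting

open Abelian

variable {C : Type u} [Category.{v} C] [Abelian C] [HasExt.{w} C]

lemma subsingleton_ext_of_retract_right (X : C) {Y Y' : C} (r : Retract Y Y') (n : ℕ)
    (h : Subsingleton (Ext.{w} X Y' n)) : Subsingleton (Ext.{w} X Y n) :=
  subsingleton_of_forall_eq 0 fun x ↦ by
    rw [← Ext.comp_mk₀_id x, ← r.retract, ← Ext.mk₀_comp_mk₀, ← Ext.comp_assoc_of_third_deg_zero,
      Subsingleton.elim (x.comp (Ext.mk₀ r.i) (add_zero n)) 0, Ext.zero_comp]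

variable {S : ShortComplex C} (hS : S.ShortExact)
include hS

lemma subsingleton_ext_X₁_left (Y : C) (n : ℕ) (h₂ : Subsingleton (Ext.{w} S.X₂ Y n))
    (h₃ : Subsingleton (Ext.{w} S.X₃ Y (n + 1))) : Subsingleton (Ext.{w} S.X₁ Y n) :=
  subsingleton_of_forall_eq 0 fun x ↦ by
    obtain ⟨y, rfl⟩ := Ext.contravariant_sequence_exact₁ hS Y x (add_comm 1 n)
      (Subsingleton.elim _ _)
    rw [Subsingleton.elim y 0, Ext.comp_zero]

lemma subsingleton_ext_X₃_left (Y : C) (n : ℕ) (h₁ : Subsingleton (Ext.{w} S.X₁ Y n))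
    (h₂ : Subsingleton (Ext.{w} S.X₂ Y (n + 1))) : Subsingleton (Ext.{w} S.X₃ Y (n + 1)) :=
  subsingleton_of_forall_eq 0 fun x ↦ by
    obtain ⟨y, rfl⟩ := Ext.contravariant_sequence_exact₃ hS Y x (Subsingleton.elim _ _)
      (add_comm 1 n)
    rw [Subsingleton.elim y 0, Ext.comp_zero]

lemma subsingleton_ext_X₂_right (X : C) (n : ℕ) (h₁ : Subsingleton (Ext.{w} X S.X₁ n))
    (h₃ : Subsingleton (Ext.{w} X S.X₃ n)) : Subsingleton (Ext.{w} X S.X₂ n) :=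
  subsingleton_of_forall_eq 0 fun x ↦ by
    obtain ⟨y, rfl⟩ := Ext.covariant_sequence_exact₂ X hS x (Subsingleton.elim _ _)
    rw [Subsingleton.elim y 0, Ext.zero_comp]

lemma subsingleton_ext_X₃_right (X : C) (n : ℕ) (h₁ : Subsingleton (Ext.{w} X S.X₁ (n + 1)))
    (h₂ : Subsingleton (Ext.{w} X S.X₂ n)) : Subsingleton (Ext.{w} X S.X₃ n) :=
  subsingleton_of_forall_eq 0 fun x ↦ by
    obtain ⟨y, rfl⟩ := Ext.covariant_sequence_exact₃ X hS x rfl (Subsingleton.elim _ _)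
    rw [Subsingleton.elim y 0, Ext.zero_comp]

lemma exists_extension_of_subsingleton_ext_one {Y : C} (h : Subsingleton (Ext.{w} S.X₃ Y 1))
    (φ : S.X₁ ⟶ Y) : ∃ ψ : S.X₂ ⟶ Y, S.f ≫ ψ = φ := by
  obtain ⟨y, hy⟩ := Ext.contravariant_sequence_exact₁ hS Y (Ext.mk₀ φ) (add_zero 1)
    (Subsingleton.elim _ _)
  obtain ⟨ψ, rfl⟩ := Ext.homEquiv₀.symm.surjective y
  exact ⟨ψ, Ext.homEquiv₀.symm.injective (by simpa using hy)⟩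

lemma subsingleton_ext_one_of_exists_extension {Y : C}
    (h₂ : Subsingleton (Ext.{w} S.X₂ Y 1)) (h : ∀ φ : S.X₁ ⟶ Y, ∃ ψ : S.X₂ ⟶ Y, S.f ≫ ψ = φ) :
    Subsingleton (Ext.{w} S.X₃ Y 1) :=
  subsingleton_of_forall_eq 0 fun x ↦ by
    obtain ⟨y, rfl⟩ := Ext.contravariant_sequence_exact₃ hS Y x (Subsingleton.elim _ _)
      (add_zero 1)
    obtain ⟨φ, rfl⟩ := Ext.homEquiv₀.symm.surjective y
    obtain ⟨ψ, rfl⟩ := h φ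
    simp [← Ext.mk₀_comp_mk₀]

end DimensionShifting

section TwoSidedChain

lemma exists_int_chain {A : ℤ → Type*} (r : ∀ j k, A j → A k → Prop)
    (hright : ∀ j k, j + 1 = k → ∀ a, ∃ b, r j k a b)
    (hleft : ∀ j k, j + 1 = k → ∀ b, ∃ a, r j k a b) (j₀ : ℤ) (a₀ : A j₀) :
    ∃ a : ∀ j, A j, a j₀ = a₀ ∧ ∀ j k, j + 1 = k → r j k (a j) (a k) := by
  choose next hnext using hright
  choose prev hprev using hleft
  let a (j : ℤ) : A j := Int.inductionOn' (motive := A) j j₀ a₀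
    (fun k _ x ↦ next k (k + 1) rfl x) (fun k _ x ↦ prev (k - 1) k (sub_add_cancel k 1) x)
  refine ⟨a, Int.inductionOn'_self .., ?_⟩
  rintro j k hjk
  rcases le_or_gt j₀ j with h | h
  · obtain rfl := hjk
    have ha : a (j + 1) = next j (j + 1) rfl (a j) := Int.inductionOn'_add_one h ..
    exact ha ▸ hnext ..
  · obtain rfl : j = k - 1 := by lia
    have ha : a (k - 1) = prev (k - 1) k (sub_add_cancel k 1) (a k) :=
      Int.inductionOn'_sub_one (by lia) ..
    exact ha ▸ hprev ..

end TwoSidedChain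

section CyclesSequence

variable {C : Type u} [Category.{v} C] [Abelian C]

/-- The sequence `Zⁱ ⟶ Pⁱ ⟶ Zʲ` attached to a cochain complex `P`, where `Zⁱ` denotes the cycles
in degree `i`; it is of interest for `j = i + 1`. -/
abbrev cyclesSequence (P : CochainComplex C ℤ) (i j : ℤ) : ShortComplex C :=
  ShortComplex.mk (P.iCycles i) (P.toCycles i j) (by simp [← cancel_mono (P.iCycles j)])

lemma shortExact_cyclesSequence {P : CochainComplex C ℤ} {i j : ℤ} (hij : i + 1 = j)
    (hP : P.ExactAt j) : (cyclesSequence P i j).ShortExact where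
  exact := by
    have : Mono (cyclesSequence P i j).f := inferInstanceAs (Mono (P.iCycles i))
    refine ShortComplex.exact_of_f_is_kernel _ (KernelFork.IsLimit.ofι' _ _
      fun (k : _ ⟶ P.X i) (hk : k ≫ P.toCycles i j = 0) ↦
        ⟨P.liftCycles k j ((ComplexShape.up ℤ).next_eq' hij) ?_, P.liftCycles_i ..⟩)
    rw [← P.toCycles_i i j, reassoc_of% hk, zero_comp]
  mono_f := inferInstanceAs (Mono (P.iCycles i))
  epi_g := Preadditive.epi_of_isZero_cokernel' _
    (P.homologyIsCokernel i j ((ComplexShape.up ℤ).prev_eq' hij))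
    ((P.exactAt_iff_isZero_homology j).1 hP)

lemma hasInjectiveDimensionLT_of_quasiIso_single {V : C} {n : ℕ} {I : CochainComplex C ℤ}
    (φ : (HomologicalComplex.single C (ComplexShape.up ℤ) 0).obj V ⟶ I) [QuasiIso φ]
    (hI : ∀ i, Injective (I.X i)) (hzero : ∀ i : ℤ, i < 0 ∨ (n : ℤ) < i → IsZero (I.X i)) :
    HasInjectiveDimensionLT V (n + 1) := by
  have hexact (i : ℤ) (hi : 0 < i) : I.ExactAt i :=
    (exactAt_iff_of_quasiIsoAt φ i).1 (HomologicalComplex.exactAt_single_obj _ _ _ _ (by lia))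
  have hcycles (k : ℕ) (i : ℤ) (hi : i + k = n + 1) (hi₀ : 0 ≤ i) :
      HasInjectiveDimensionLT (I.cycles i) k := by
    induction k generalizing i with
    | zero =>
      exact ((hzero i (by lia)).of_mono (I.iCycles i)).hasInjectiveDimensionLT_zero
    | succ k ih =>
      have : Injective (cyclesSequence I i (i + 1)).X₂ := hI i
      exact (shortExact_cyclesSequence rfl (hexact (i + 1) (by lia))).hasInjectiveDimensionLT_X₁ _
        (ih (i + 1) (by lia) (by lia)) (hasInjectiveDimensionLT_of_ge _ 1 _ (by lia))
  have := hcycles (n + 1) 0 (by simp) le_rfl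
  have e : V ≅ I.cycles 0 :=
    (HomologicalComplex.singleObjHomologySelfIso (ComplexShape.up ℤ) 0 V).symm ≪≫
      asIso (HomologicalComplex.homologyMap φ 0) ≪≫
      (I.isoHomologyπ (-1) 0 (by simp) ((hzero _ (by lia)).eq_zero_of_src _)).symm
  exact hasInjectiveDimensionLT_of_iso e.symm _

lemma exactAt_of_d_eq_comp {P : CochainComplex C ℤ} {i j k : ℤ} (hij : i + 1 = j) (hjk : j + 1 = k)
    {Z Z' : C} {p : P.X i ⟶ Z} {f : Z ⟶ P.X j} {g : P.X j ⟶ Z'} {q : Z' ⟶ P.X k} [Epi p] [Mono q]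
    (hd : P.d i j = p ≫ f) (hd' : P.d j k = g ≫ q) {w : f ≫ g = 0}
    (h : (ShortComplex.mk f g w).Exact) : P.ExactAt j := by
  rw [P.exactAt_iff' i j k ((ComplexShape.up ℤ).prev_eq' hij) ((ComplexShape.up ℤ).next_eq' hjk),
    ShortComplex.exact_iff_exact_up_to_refinements]
  intro A (x : A ⟶ P.X j) (hx : x ≫ P.d j k = 0)
  obtain ⟨A', π, hπ, z, hz⟩ := h.exact_up_to_refinements x (by
    rwa [hd', ← Category.assoc, ← zero_comp, cancel_mono] at hx)
  obtain ⟨A'', π', hπ', y, hy⟩ := surjective_up_to_refinements_of_epi p z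
  refine ⟨A'', π' ≫ π, epi_comp _ _, y, ?_⟩
  change (π' ≫ π) ≫ x = y ≫ P.d i j
  rw [Category.assoc, hz, reassoc_of% hy, hd]

lemma exists_acyclic_of_shortExact {Z X : ℤ → C} (f : ∀ i, Z i ⟶ X i) (g : ∀ i, X i ⟶ Z (i + 1))
    (w : ∀ i, f i ≫ g i = 0) (h : ∀ i, (ShortComplex.mk (f i) (g i) (w i)).ShortExact) :
    ∃ P : CochainComplex C ℤ, (∀ i, P.X i = X i) ∧ (∀ i, P.ExactAt i) ∧
      ∀ i, Nonempty (P.cycles i ≅ Z i) := by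
  have (i : ℤ) : Mono (f i) := (h i).mono_f
  have (i : ℤ) : Epi (g i) := (h i).epi_g
  let δ (i : ℤ) : X i ⟶ X (i + 1) := g i ≫ f (i + 1)
  let P : CochainComplex C ℤ := CochainComplex.of X δ fun i ↦ by simp [δ, reassoc_of% w (i + 1)]
  have hd (i : ℤ) : P.d i (i + 1) = g i ≫ f (i + 1) := CochainComplex.of_d X δ i
  refine ⟨P, fun _ ↦ rfl, fun i ↦ ?_, fun i ↦ ⟨?_⟩⟩
  · obtain ⟨i, rfl⟩ : ∃ j, i = j + 1 := ⟨i - 1, by lia⟩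
    exact exactAt_of_d_eq_comp rfl rfl (hd i) (hd (i + 1)) (h (i + 1)).exact
  · exact (P.cyclesIsKernel i (i + 1) (by simp)).conePointUniqueUpToIso
      (isKernelCompMono (h i).fIsKernel (f (i + 1)) (hd i))

end CyclesSequence

section AcyclicProjective

open Abelian

variable {C : Type u} [Category.{v} C] [Abelian C]

/-- An acyclic (that is, exact) cochain complex of projective objects. -/
structure IsAcyclicProjective (Q : CochainComplex C ℤ) : Prop where
  projective : ∀ i, Projective (Q.X i)
  exactAt : ∀ i, Q.ExactAt i

namespace IsAcyclicProjective

variable {Q : CochainComplex C ℤ} (hQ : IsAcyclicProjective Q)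
include hQ

lemma shortExact {i j : ℤ} (hij : i + 1 = j) : (cyclesSequence Q i j).ShortExact :=
  shortExact_cyclesSequence hij (hQ.exactAt j)

variable [HasExt.{w} C]

lemma subsingleton_ext_X (i : ℤ) (V : C) (k : ℕ) : Subsingleton (Ext.{w} (Q.X i) V (k + 1)) :=
  have := hQ.projective i
  Ext.subsingleton_of_projective _ _ _

lemma subsingleton_ext_cycles_succ_iff {i j : ℤ} (hij : i + 1 = j) (V : C) (k : ℕ) :
    Subsingleton (Ext.{w} (Q.cycles j) V (k + 2)) ↔
      Subsingleton (Ext.{w} (Q.cycles i) V (k + 1)) :=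
  ⟨subsingleton_ext_X₁_left (hQ.shortExact hij) V (k + 1) (hQ.subsingleton_ext_X i V k),
    fun h ↦ subsingleton_ext_X₃_left (hQ.shortExact hij) V (k + 1) h
      (hQ.subsingleton_ext_X i V (k + 1))⟩

lemma subsingleton_ext_cycles {V : C} {d : ℕ} (hV : HasInjectiveDimensionLT V d) (i : ℤ) (k : ℕ) :
    Subsingleton (Ext.{w} (Q.cycles i) V (k + 1)) := by
  suffices hm : ∀ (m k : ℕ) (i : ℤ), d ≤ k + 1 + m →
      Subsingleton (Ext.{w} (Q.cycles i) V (k + 1)) from hm d k i (by lia)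
  intro m
  induction m with
  | zero => exact fun k i hk ↦ HasInjectiveDimensionLT.subsingleton V d _ hk _
  | succ m ih =>
    exact fun k i hk ↦ (hQ.subsingleton_ext_cycles_succ_iff rfl V k).1 (ih (k + 1) (i + 1) (by lia))

/-- Dimension shifting in both variables. -/
lemma subsingleton_ext_one_cycles_of_shortExact {S : ShortComplex C} (hS : S.ShortExact) {d : ℕ}
    (h₂ : HasInjectiveDimensionLT S.X₂ d) {i j : ℤ} (hij : i + 1 = j)
    (h : Subsingleton (Ext.{w} (Q.cycles i) S.X₁ 1)) :
    Subsingleton (Ext.{w} (Q.cycles j) S.X₃ 1) :=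
  subsingleton_ext_X₃_right hS _ 1 ((hQ.subsingleton_ext_cycles_succ_iff hij _ 0).2 h)
    (hQ.subsingleton_ext_cycles h₂ j 0)

end IsAcyclicProjective

end AcyclicProjective

section Contractible

variable {C : Type u} [Category.{v} C] [Abelian C]

lemma isZero_quotient_of_splitting {P : CochainComplex C ℤ}
    (σ : ∀ i j, i + 1 = j → (cyclesSequence P i j).Splitting) :
    IsZero ((HomotopyCategory.quotient C (ComplexShape.up ℤ)).obj P) := by
  rw [HomotopyCategory.isZero_quotient_obj_iff]
  let r (i : ℤ) : P.X i ⟶ P.cycles i := (σ i (i + 1) rfl).r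
  let s (i j : ℤ) (hij : (ComplexShape.up ℤ).Rel i j) : P.cycles j ⟶ P.X i := (σ i j hij).s
  have hr (i : ℤ) : P.iCycles i ≫ r i = 𝟙 _ := (σ i (i + 1) rfl).f_r
  have hs (i j : ℤ) (hij) : s i j hij ≫ P.toCycles i j = 𝟙 _ := (σ i j hij).s_g
  have hrs (i : ℤ) (hi) : r i ≫ P.iCycles i + P.toCycles i (i + 1) ≫ s i (i + 1) hi = 𝟙 _ :=
    (σ i (i + 1) rfl).id
  have hid : 𝟙 P = Homotopy.nullHomotopicMap' fun j i hij ↦ r j ≫ s i j hij := by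
    ext i : 1
    rw [Homotopy.nullHomotopicMap'_f (k₂ := i - 1) (k₁ := i) (k₀ := i + 1) (by simp) (by simp),
      ← P.toCycles_i i (i + 1), ← P.toCycles_i (i - 1) i, Category.assoc, Category.assoc,
      reassoc_of% hr (i + 1), reassoc_of% hs (i - 1) i, add_comm, hrs]
    rfl
  rw [hid]
  exact ⟨Homotopy.nullHomotopy' _⟩

end Contractible

section ExtensionToCycles

open Abelian

variable {C : Type u} [Category.{v} C] [Abelian C]

/-- `φ : Zⁱ(Q) ⟶ Zⁱ(Y)` and `φ' : Zʲ(Q) ⟶ Zʲ(Y)`, where `j = i + 1`, are the restriction and the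
corestriction of one map `Qⁱ ⟶ Yⁱ`. Families linked in all degrees are chain maps. -/
def HasCommonLift {Q Y : CochainComplex C ℤ} {i j : ℤ} (φ : Q.cycles i ⟶ Y.cycles i)
    (φ' : Q.cycles j ⟶ Y.cycles j) : Prop :=
  ∃ ψ : Q.X i ⟶ Y.X i, Q.iCycles i ≫ ψ = φ ≫ Y.iCycles i ∧
    Q.toCycles i j ≫ φ' = ψ ≫ Y.toCycles i j

namespace IsAcyclicProjective

variable {Q Y : CochainComplex C ℤ} (hQ : IsAcyclicProjective Q)
include hQ

lemma exists_hasCommonLift_left (hY : ∀ i, Y.ExactAt i) {i j : ℤ} (hij : i + 1 = j)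
    (φ' : Q.cycles j ⟶ Y.cycles j) : ∃ φ : Q.cycles i ⟶ Y.cycles i, HasCommonLift φ φ' := by
  have := hQ.projective i
  have hS := shortExact_cyclesSequence hij (hY j)
  have := hS.mono_f
  have : Epi (Y.toCycles i j) := hS.epi_g
  let ψ : Q.X i ⟶ Y.X i := Projective.factorThru (Q.toCycles i j ≫ φ') (Y.toCycles i j)
  have hψ : ψ ≫ Y.toCycles i j = Q.toCycles i j ≫ φ' := Projective.factorThru_comp _ _
  have hzero : (Q.iCycles i ≫ ψ) ≫ (cyclesSequence Y i j).g = 0 := by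
    rw [Category.assoc]
    change Q.iCycles i ≫ ψ ≫ Y.toCycles i j = 0
    rw [hψ, reassoc_of% (cyclesSequence Q i j).zero, zero_comp]
  exact ⟨hS.exact.lift _ hzero, ψ, (hS.exact.lift_f _ hzero).symm, hψ.symm⟩

variable [HasExt.{w} C]

lemma exists_hasCommonLift_right
    (hext : ∀ i j, Subsingleton (Ext.{w} (Q.cycles i) (Y.X j) 1)) {i j : ℤ} (hij : i + 1 = j)
    (φ : Q.cycles i ⟶ Y.cycles i) : ∃ φ' : Q.cycles j ⟶ Y.cycles j, HasCommonLift φ φ' := by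
  have hS := hQ.shortExact hij
  obtain ⟨ψ, hψ⟩ := exists_extension_of_subsingleton_ext_one hS (hext j i) (φ ≫ Y.iCycles i)
  have := hS.epi_g
  have hzero : (cyclesSequence Q i j).f ≫ ψ ≫ Y.toCycles i j = 0 := by
    rw [reassoc_of% hψ, (cyclesSequence Y i j).zero, comp_zero]
  exact ⟨hS.exact.desc _ hzero, ψ, hψ, hS.exact.g_desc _ hzero⟩

lemma exists_cyclesMap_eq (hext : ∀ i j, Subsingleton (Ext.{w} (Q.cycles i) (Y.X j) 1))
    (hY : ∀ i, Y.ExactAt i) (i₀ : ℤ) (φ₀ : Q.cycles i₀ ⟶ Y.cycles i₀) :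
    ∃ F : Q ⟶ Y, HomologicalComplex.cyclesMap F i₀ = φ₀ := by
  obtain ⟨φ, rfl, hφ⟩ := exists_int_chain (A := fun i ↦ (Q.cycles i ⟶ Y.cycles i))
    (fun _ _ φ φ' ↦ HasCommonLift φ φ') (fun _ _ hij ↦ hQ.exists_hasCommonLift_right hext hij)
    (fun _ _ hij ↦ hQ.exists_hasCommonLift_left hY hij) i₀ φ₀
  choose ψ hψ using fun i ↦ hφ i (i + 1) rfl
  have hcomm (i j : ℤ) (hij : i + 1 = j) : ψ i ≫ Y.d i j = Q.d i j ≫ ψ j := by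
    obtain rfl := hij
    rw [← Q.toCycles_i, Category.assoc, (hψ (i + 1)).1, reassoc_of% (hψ i).2, Y.toCycles_i]
  refine ⟨{ f := ψ, comm' := hcomm }, ?_⟩
  rw [← cancel_mono (Y.iCycles i₀), HomologicalComplex.cyclesMap_i]
  exact (hψ i₀).1

/-- A null homotopy of `F` provides, through its component in degree `i`, an extension of
`Zⁱ(F)` to `Qⁱ`. -/
lemma subsingleton_ext_one_of_homotopy
    (hext : ∀ i j, Subsingleton (Ext.{w} (Q.cycles i) (Y.X j) 1))
    (hY : ∀ i, Y.ExactAt i) (hnull : ∀ F : Q ⟶ Y, Nonempty (Homotopy F 0)) {i j : ℤ}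
    (hij : i + 1 = j) : Subsingleton (Ext.{w} (Q.cycles j) (Y.cycles i) 1) := by
  refine subsingleton_ext_one_of_exists_extension (hQ.shortExact hij)
    (hQ.subsingleton_ext_X i _ 0) fun φ ↦ ?_
  obtain ⟨F, rfl⟩ := hQ.exists_cyclesMap_eq hext hY i φ
  obtain ⟨h⟩ := hnull F
  refine ⟨h.hom i (i - 1) ≫ Y.toCycles (i - 1) i, ?_⟩
  simp [← cancel_mono (Y.iCycles i), h.comm i, prevD_eq h.hom (show i - 1 + 1 = i by simp),
    dNext_eq h.hom (show i + 1 = i + 1 from rfl)]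

lemma isZero_quotient
    (h : ∀ i j, i + 1 = j → Subsingleton (Ext.{w} (Q.cycles j) (Q.cycles i) 1)) :
    IsZero ((HomotopyCategory.quotient C (ComplexShape.up ℤ)).obj Q) := by
  refine isZero_quotient_of_splitting fun i j hij ↦ ?_
  have hS := hQ.shortExact hij
  have hr := exists_extension_of_subsingleton_ext_one hS (h i j hij) (𝟙 _)
  have := hS.epi_g
  exact ShortComplex.Splitting.ofExactOfRetraction _ hS.exact hr.choose hr.choose_spec inferInstance

end IsAcyclicProjective

end ExtensionToCycles

section Shift

open Abelian

variable {C : Type u} [Category.{v} C] [Abelian C]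

lemma exactAt_shift {Y : CochainComplex C ℤ} (hY : ∀ i, Y.ExactAt i) (n i : ℤ) :
    (Y⟦n⟧).ExactAt i :=
  (ShortComplex.exact_iff_of_iso
    ((CochainComplex.shiftShortComplexFunctorIso C n i (n + i) rfl).app Y)).2 (hY (n + i))

/-- The isomorphism `Zⁱ(Y[n]) ≅ Zᵏ(Y)` for `n + i = k`. -/
def shiftCyclesIso (Y : CochainComplex C ℤ) {n i k : ℤ} (hk : n + i = k) :
    (Y⟦n⟧).cycles i ≅ Y.cycles k :=
  ShortComplex.cyclesMapIso ((CochainComplex.shiftShortComplexFunctorIso C n i k hk).app Y)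

lemma nonempty_homotopy_zero_of_forall_eq_zero {Q Y : CochainComplex C ℤ} {n : ℤ}
    (h : ∀ f : (HomotopyCategory.quotient C (ComplexShape.up ℤ)).obj Q ⟶
      ((HomotopyCategory.quotient C (ComplexShape.up ℤ)).obj Y)⟦n⟧, f = 0) (F : Q ⟶ Y⟦n⟧) :
    Nonempty (Homotopy F 0) := by
  let e := ((HomotopyCategory.quotient C (ComplexShape.up ℤ)).commShiftIso n).app Y
  refine ⟨HomotopyCategory.homotopyOfEq _ _ ?_⟩
  rw [Functor.map_zero, ← cancel_mono e.hom, zero_comp]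
  exact h _

namespace IsAcyclicProjective

variable [HasExt.{w} C] {Q Y : CochainComplex C ℤ}

lemma eventually_subsingleton_ext_one_cycles (hQ : IsAcyclicProjective Q)
    (hext : ∀ i j, Subsingleton (Ext.{w} (Q.cycles i) (Y.X j) 1)) (hY : ∀ i, Y.ExactAt i)
    (h : EventuallyOrthogonal ((HomotopyCategory.quotient C (ComplexShape.up ℤ)).obj Q)
      ((HomotopyCategory.quotient C (ComplexShape.up ℤ)).obj Y)) (k : ℤ) :
    ∀ᶠ i in Filter.atBot, Subsingleton (Ext.{w} (Q.cycles i) (Y.cycles k) 1) := by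
  obtain ⟨N, hN⟩ := h
  filter_upwards [Filter.eventually_le_atBot (k + 1 - N)] with i hi
  let n : ℤ := k - (i - 1)
  have hext_cycles : Subsingleton (Ext.{w} (Q.cycles i) ((Y⟦n⟧).cycles (i - 1)) 1) :=
    hQ.subsingleton_ext_one_of_homotopy (fun i j ↦ hext i (j + n)) (exactAt_shift hY n)
      (nonempty_homotopy_zero_of_forall_eq_zero (hN n (by lia))) (sub_add_cancel i 1)
  exact subsingleton_ext_of_retract_right _
    (Retract.ofIso (shiftCyclesIso Y (n := n) (sub_add_cancel k (i - 1))).symm) 1 hext_cycles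

end IsAcyclicProjective

end Shift

section CohenMacaulay

open Abelian

variable {R : Type u} [Ring R]

/-- The free module `Rᵐ` as an object of the category of `R`-modules. -/
abbrev finFree (R : Type u) [Ring R] (m : ℕ) : ModuleCat.{u} R := ModuleCat.of R (Fin m → R)

lemma subsingleton_ext_finFree {X : ModuleCat.{u} R} {n : ℕ}
    [Subsingleton (Ext.{u} X (ModuleCat.of R R) n)] (m : ℕ) :
    Subsingleton (Ext.{u} X (finFree R m) n) :=
  subsingleton_ext_of_retract_right X
    (Retract.ofIso (ModuleCat.biproductIsoPi fun _ : Fin m ↦ ModuleCat.of R R).symm) n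
    (Ext.addEquivBiproduct X (biproduct.isBilimit _) n).subsingleton

lemma hasInjectiveDimensionLT_finFree {d : ℕ} [HasInjectiveDimensionLT (ModuleCat.of R R) d]
    (m : ℕ) : HasInjectiveDimensionLT (finFree R m) d :=
  .mk.{u} fun i hi Y e ↦
    have := HasInjectiveDimensionLT.subsingleton.{u} (ModuleCat.of R R) d i hi Y
    have := subsingleton_ext_finFree (X := Y) (n := i) m
    Subsingleton.elim e 0

lemma subsingleton_ext_finFree_left (m : ℕ) (Y : ModuleCat.{u} R) (k : ℕ) :
    Subsingleton (Ext.{u} (finFree R m) Y (k + 1)) :=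
  Ext.subsingleton_of_projective _ _ _

/-- `U` is a syzygy of `V`: there is a short exact sequence `0 ⟶ U ⟶ Rᵐ ⟶ V ⟶ 0`. -/
def IsSyzygy (U V : ModuleCat.{u} R) : Prop :=
  ∃ (m : ℕ) (f : U ⟶ finFree R m) (g : finFree R m ⟶ V) (w : f ≫ g = 0),
    (ShortComplex.mk f g w).ShortExact

lemma exists_isSyzygy_of_finite [IsNoetherianRing R] (V : ModuleCat.{u} R) [Module.Finite R V] :
    ∃ U : ModuleCat.{u} R, Module.Finite R U ∧ IsSyzygy U V := by
  obtain ⟨m, p, hp⟩ := Module.Finite.exists_fin' R V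
  exact ⟨_, inferInstanceAs (Module.Finite R (LinearMap.ker p)), m, _, _, _,
    LinearMap.shortExact_shortComplexKer hp⟩

/-- A Cohen–Macaulay module: finitely generated, with `Extⁱ(V, R) = 0` for all `i > 0`. -/
structure IsCohenMacaulay (V : ModuleCat.{u} R) : Prop where
  finite : Module.Finite R V
  subsingleton_ext : ∀ k : ℕ, Subsingleton (Ext.{u} V (ModuleCat.of R R) (k + 1))

lemma IsCohenMacaulay.of_isSyzygy [IsNoetherianRing R] {U V : ModuleCat.{u} R}
    (hV : IsCohenMacaulay V) (h : IsSyzygy U V) : IsCohenMacaulay U := by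
  obtain ⟨m, f, g, w, hS⟩ := h
  refine ⟨?_, fun k ↦ subsingleton_ext_X₁_left hS _ _ (subsingleton_ext_finFree_left m _ k)
    (hV.subsingleton_ext (k + 1))⟩
  exact Module.Finite.of_injective f.hom ((ModuleCat.mono_iff_injective f).1 hS.mono_f)

lemma IsCohenMacaulay.exists_isSyzygy [IsNoetherianRing R] {V : ModuleCat.{u} R}
    (hV : IsCohenMacaulay V) : ∃ U : ModuleCat.{u} R, IsCohenMacaulay U ∧ IsSyzygy U V := by
  have := hV.finite
  obtain ⟨U, -, hU⟩ := exists_isSyzygy_of_finite V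
  exact ⟨U, hV.of_isSyzygy hU, hU⟩

end CohenMacaulay

section Duality

open Abelian

variable (Λ : Type u) [Ring Λ]

instance smulCommClass_mulOpposite_self : SMulCommClass Λᵐᵒᵖ Λ Λᵐᵒᵖ where
  smul_comm a b c := MulOpposite.unop_injective (by simp [mul_assoc])

/-- The `Λ`-dual `Hom(V, Λ)` of a right `Λ`-module `V`, as a left `Λ`-module. -/
abbrev dual (V : ModuleCat.{u} Λᵐᵒᵖ) : ModuleCat.{u} Λ := ModuleCat.of Λ (V →ₗ[Λᵐᵒᵖ] Λᵐᵒᵖ)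

/-- Precomposition with `f`, as a map of `Λ`-duals. -/
abbrev dualMap {V W : ModuleCat.{u} Λᵐᵒᵖ} (f : V ⟶ W) : dual Λ W ⟶ dual Λ V :=
  ModuleCat.ofHom (LinearMap.lcomp Λ Λᵐᵒᵖ f.hom)

/-- The dual sequence `0 ⟶ S.X₃* ⟶ S.X₂* ⟶ S.X₁* ⟶ 0`. -/
abbrev dualSequence (S : ShortComplex (ModuleCat.{u} Λᵐᵒᵖ)) : ShortComplex (ModuleCat.{u} Λ) :=
  ShortComplex.mk (dualMap Λ S.g) (dualMap Λ S.f) (by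
    ext y x
    simp [← ModuleCat.comp_apply])

lemma shortExact_dualSequence {S : ShortComplex (ModuleCat.{u} Λᵐᵒᵖ)} (hS : S.ShortExact)
    (h : Subsingleton (Ext.{u} S.X₃ (ModuleCat.of Λᵐᵒᵖ Λᵐᵒᵖ) 1)) :
    (dualSequence Λ S).ShortExact where
  exact := by
    rw [ShortComplex.ShortExact.moduleCat_exact_iff_function_exact]
    have := hS.epi_g
    refine fun y ↦ ⟨fun hy ↦ ?_, ?_⟩
    · have hfy : S.f ≫ ModuleCat.ofHom y = 0 := ModuleCat.hom_ext hy
      exact ⟨(hS.exact.desc _ hfy).hom, congrArg ModuleCat.Hom.hom (hS.exact.g_desc _ hfy)⟩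
    · rintro ⟨z, rfl⟩
      exact congr(ModuleCat.Hom.hom $((dualSequence Λ S).zero) z)
  mono_f := by
    rw [ModuleCat.mono_iff_injective]
    exact fun y y' hyy' ↦ LinearMap.cancel_right ((ModuleCat.epi_iff_surjective S.g).1 hS.epi_g)
      |>.1 hyy'
  epi_g := by
    rw [ModuleCat.epi_iff_surjective]
    intro y
    obtain ⟨z, hz⟩ := exists_extension_of_subsingleton_ext_one hS h (ModuleCat.ofHom y)
    exact ⟨z.hom, congrArg ModuleCat.Hom.hom hz⟩

/-- The dual of `Λᵐ` is `Λᵐ`. -/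
def dualFinFreeEquiv (m : ℕ) : (Fin m → Λ) ≃ₗ[Λ] dual Λ (finFree Λᵐᵒᵖ m) :=
  (LinearEquiv.piCongrRight fun _ ↦ MulOpposite.opLinearEquiv Λ).trans
    (LinearEquiv.piRing Λᵐᵒᵖ Λᵐᵒᵖ (Fin m) Λ).symm

lemma exists_eq_eval_finFree {m : ℕ} (h : dual Λ (finFree Λᵐᵒᵖ m) →ₗ[Λ] Λᵐᵒᵖ) :
    ∃ b : Fin m → Λᵐᵒᵖ, ∀ y : dual Λ (finFree Λᵐᵒᵖ m), h y = y b := by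
  refine ⟨fun j ↦ h (LinearMap.proj j), fun y ↦ ?_⟩
  have hy : y = ∑ j, (y (Pi.single j 1)).unop • LinearMap.proj j := by
    ext j
    apply MulOpposite.unop_injective
    simp [Pi.single_apply]
  conv_lhs => rw [hy]
  conv_rhs => rw [hy]
  simp [LinearMap.sum_apply]

lemma projective_dual_finFree (m : ℕ) : Projective (dual Λ (finFree Λᵐᵒᵖ m)) :=
  have := Module.Projective.of_equiv (dualFinFreeEquiv Λ m)
  inferInstance

lemma finite_dual [IsNoetherianRing Λ] (V : ModuleCat.{u} Λᵐᵒᵖ) [Module.Finite Λᵐᵒᵖ V] :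
    Module.Finite Λ (dual Λ V) := by
  obtain ⟨m, p, hp⟩ := Module.Finite.exists_fin' Λᵐᵒᵖ V
  have := Module.Finite.equiv (dualFinFreeEquiv Λ m)
  have : Function.Injective (dualMap Λ (ModuleCat.ofHom p)).hom :=
    fun y y' hyy' ↦ (LinearMap.cancel_right hp).1 hyy'
  exact .of_injective _ this

namespace IsCohenMacaulay

variable {Λ} {V : ModuleCat.{u} Λᵐᵒᵖ}

lemma shortExact_dualSequence (hV : IsCohenMacaulay V) {U : ModuleCat.{u} Λᵐᵒᵖ} {m : ℕ}
    {f : U ⟶ finFree Λᵐᵒᵖ m} {g : finFree Λᵐᵒᵖ m ⟶ V} {w : f ≫ g = 0}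
    (hS : (ShortComplex.mk f g w).ShortExact) :
    (dualSequence Λ (ShortComplex.mk f g w)).ShortExact :=
  PaperSilting.shortExact_dualSequence Λ hS (hV.subsingleton_ext 0)

/-- Dimension shifting along the dual `0 ⟶ V* ⟶ F* ⟶ U* ⟶ 0` of a free cover. -/
lemma subsingleton_ext_dual [IsNoetherianRing Λᵐᵒᵖ] {d : ℕ} {I : ModuleCat.{u} Λ}
    (hI : HasInjectiveDimensionLT I d) (hV : IsCohenMacaulay V) (k : ℕ) :
    Subsingleton (Ext.{u} (dual Λ V) I (k + 1)) := by
  suffices hm : ∀ (m k : ℕ) (V : ModuleCat.{u} Λᵐᵒᵖ), IsCohenMacaulay V → d ≤ k + 1 + m →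
      Subsingleton (Ext.{u} (dual Λ V) I (k + 1)) from hm d k V hV (by lia)
  intro m
  induction m with
  | zero => exact fun k V _ hk ↦ HasInjectiveDimensionLT.subsingleton _ d _ hk _
  | succ m ih =>
    intro k V hV hk
    obtain ⟨U, hU, n, f, g, w, hS⟩ := hV.exists_isSyzygy
    have := projective_dual_finFree Λ n
    exact subsingleton_ext_X₁_left (hV.shortExact_dualSequence hS) I (k + 1)
      (Ext.subsingleton_of_projective _ _ _) (ih (k + 1) U hU (by lia))

variable [IsNoetherianRing Λᵐᵒᵖ] {d : ℕ}
  (hΛ : HasInjectiveDimensionLT (ModuleCat.of Λ Λᵐᵒᵖ) d) (hV : IsCohenMacaulay V)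
include hΛ hV

/-- Every `Λ`-linear form on `V*` extends along `V* ⟶ F*` to a free module, where it is an
evaluation. -/
lemma exists_eq_eval (h : dual Λ V →ₗ[Λ] Λᵐᵒᵖ) : ∃ v : V, ∀ y : dual Λ V, h y = y v := by
  obtain ⟨U, hU, n, f, g, w, hS⟩ := hV.exists_isSyzygy
  obtain ⟨h', hh'⟩ := exists_extension_of_subsingleton_ext_one (hV.shortExact_dualSequence hS)
    (hU.subsingleton_ext_dual hΛ 0) (ModuleCat.ofHom h)
  obtain ⟨b, hb⟩ := exists_eq_eval_finFree Λ h'.hom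
  exact ⟨g b, fun y ↦ (congr($hh' y)).symm.trans (hb _)⟩

lemma eq_zero_of_forall_dual {v : V} (hv : ∀ y : dual Λ V, y v = 0) : v = 0 := by
  obtain ⟨U, hU, n, f, g, w, hS⟩ := hV.exists_isSyzygy
  obtain ⟨c, rfl⟩ := (ModuleCat.epi_iff_surjective g).1 hS.epi_g v
  have hS' := hV.shortExact_dualSequence hS
  have := hS'.epi_g
  let ev : dual Λ (finFree Λᵐᵒᵖ n) ⟶ ModuleCat.of Λ Λᵐᵒᵖ := ModuleCat.ofHom (LinearMap.applyₗ' Λ c)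
  have hev : dualMap Λ g ≫ ev = 0 := by
    ext y
    exact hv y
  obtain ⟨u, hu⟩ := hU.exists_eq_eval hΛ (hS'.exact.desc ev hev).hom
  have hc : c = f u := by
    funext k
    let y : dual Λ (finFree Λᵐᵒᵖ n) := LinearMap.proj k
    exact (congr($(hS'.exact.g_desc ev hev) y)).symm.trans (hu _)
  rw [hc, ← ModuleCat.comp_apply, w]
  rfl

/-- The cosyzygy is the cokernel of the map `V ⟶ Λⁿ` whose components generate `V*`. -/
lemma exists_isSyzygy_left [IsNoetherianRing Λ] :
    ∃ W : ModuleCat.{u} Λᵐᵒᵖ, IsCohenMacaulay W ∧ IsSyzygy V W := by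
  have := hV.finite
  have := finite_dual Λ V
  obtain ⟨n, s, hs⟩ := Module.Finite.exists_fin (R := Λ) (M := dual Λ V)
  let j : V ⟶ finFree Λᵐᵒᵖ n := ModuleCat.ofHom (LinearMap.pi s)
  have hext (y : V ⟶ ModuleCat.of Λᵐᵒᵖ Λᵐᵒᵖ) : ∃ z : finFree Λᵐᵒᵖ n ⟶ _, j ≫ z = y := by
    obtain ⟨a, ha⟩ := (Submodule.mem_span_range_iff_exists_fun Λ).1
      (hs ▸ Submodule.mem_top : y.hom ∈ Submodule.span Λ (Set.range s))
    refine ⟨ModuleCat.ofHom (∑ k, a k • (LinearMap.proj k : dual Λ (finFree Λᵐᵒᵖ n))), ?_⟩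
    ext v
    simp [← ha, j, LinearMap.sum_apply]
  have : Mono j := by
    rw [ModuleCat.mono_iff_injective, injective_iff_map_eq_zero]
    refine fun v hv ↦ hV.eq_zero_of_forall_dual hΛ fun y ↦ ?_
    obtain ⟨z, hz⟩ := hext (ModuleCat.ofHom y)
    rw [← ModuleCat.hom_ofHom y, ← hz, ModuleCat.comp_apply, hv, map_zero]
  have hS : (ShortComplex.mk j (cokernel.π j) (cokernel.condition j)).ShortExact :=
    { exact := ShortComplex.exact_cokernel j }
  refine ⟨cokernel j, ⟨?_, fun k ↦ ?_⟩, n, j, _, _, hS⟩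
  · exact .of_surjective _ ((ModuleCat.epi_iff_surjective (cokernel.π j)).1 inferInstance)
  · have hfree := subsingleton_ext_finFree_left n (ModuleCat.of Λᵐᵒᵖ Λᵐᵒᵖ) k
    cases k with
    | zero => exact subsingleton_ext_one_of_exists_extension hS hfree hext
    | succ k => exact subsingleton_ext_X₃_left hS _ (k + 1) (hV.subsingleton_ext k) hfree

lemma exists_acyclic [IsNoetherianRing Λ] :
    ∃ Y : CochainComplex (ModuleCat.{u} Λᵐᵒᵖ) ℤ,
      (∀ i, ∃ m, Nonempty (Y.X i ≅ finFree Λᵐᵒᵖ m)) ∧ (∀ i, Y.ExactAt i) ∧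
        Nonempty (Y.cycles 0 ≅ V) := by
  obtain ⟨Z, hZ₀, hZ⟩ := exists_int_chain
    (A := fun _ ↦ {W : ModuleCat.{u} Λᵐᵒᵖ // IsCohenMacaulay W})
    (fun _ _ W W' ↦ IsSyzygy W.1 W'.1)
    (fun _ _ _ W ↦ by simpa using W.2.exists_isSyzygy_left hΛ)
    (fun _ _ _ W ↦ by simpa using W.2.exists_isSyzygy) 0 ⟨V, hV⟩
  choose m f g w hS using fun i ↦ hZ i (i + 1) rfl
  obtain ⟨Y, hYX, hY, hYZ⟩ := exists_acyclic_of_shortExact f g w hS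
  refine ⟨Y, fun i ↦ ⟨m i, ⟨eqToIso (hYX i)⟩⟩, hY, ?_⟩
  simpa only [hZ₀] using hYZ 0

end IsCohenMacaulay

end Duality

section FiniteLength

open Abelian

variable {R : Type u} [Ring R] [IsArtinianRing R]

lemma nonempty_retract_quotient_jacobson (S : ModuleCat.{u} R) [IsSimpleModule R S] :
    Nonempty (Retract S (ModuleCat.of R (R ⧸ Ring.jacobson R))) := by
  have := IsSimpleModule.nontrivial R S
  obtain ⟨x, hx⟩ := exists_ne (0 : S)
  have hker : Ring.jacobson R ≤ LinearMap.ker (LinearMap.toSpanSingleton R S x) := by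
    rw [Ring.jacobson_eq_sInf_isMaximal]
    exact sInf_le (IsSimpleModule.ker_toSpanSingleton_isMaximal R hx)
  let p : (R ⧸ Ring.jacobson R) →ₗ[R] S := Submodule.liftQ _ _ hker
  have hp : Function.Surjective p := fun y ↦
    have ⟨r, hr⟩ := IsSimpleModule.toSpanSingleton_surjective R hx y
    ⟨Submodule.Quotient.mk r, hr⟩
  have : IsSemisimpleModule R (R ⧸ Ring.jacobson R) :=
    (IsArtinian.isSemisimpleModule_iff_jacobson R _).2 (Module.jacobson_quotient_jacobson R R)
  obtain ⟨s, hs⟩ := IsSemisimpleModule.lifting_property p hp LinearMap.id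
  exact ⟨⟨ModuleCat.ofHom s, ModuleCat.ofHom p, ModuleCat.hom_ext hs⟩⟩

lemma subsingleton_ext_of_quotient_jacobson {X : ModuleCat.{u} R} {n : ℕ}
    (h : Subsingleton (Ext.{u} X (ModuleCat.of R (R ⧸ Ring.jacobson R)) n))
    (V : ModuleCat.{u} R) [Module.Finite R V] : Subsingleton (Ext.{u} X V n) := by
  suffices ∀ (M : Type u) [AddCommGroup M] [Module R M], IsFiniteLength R M →
      Subsingleton (Ext.{u} X (ModuleCat.of R M) n) from
    this V (isFiniteLength_iff_isNoetherian_isArtinian.2 ⟨inferInstance, inferInstance⟩)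
  intro M _ _ hM
  induction hM with
  | @of_subsingleton M _ _ _ =>
    have hM : IsZero (ModuleCat.of R M) := ModuleCat.isZero_of_subsingleton _
    exact subsingleton_ext_of_retract_right X ⟨0, 0, hM.eq_of_src _ _⟩ n h
  | @of_simple_quotient M _ _ N hN _ ih =>
    have : IsSimpleModule R (ModuleCat.of R (M ⧸ N)) := hN
    obtain ⟨r⟩ := nonempty_retract_quotient_jacobson (ModuleCat.of R (M ⧸ N))
    refine subsingleton_ext_X₂_right (LinearMap.shortExact_shortComplexKer N.mkQ_surjective) X n ?_
      (subsingleton_ext_of_retract_right X r n h)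
    change Subsingleton (Ext X (ModuleCat.of R (LinearMap.ker N.mkQ)) n)
    rwa [N.ker_mkQ]

end FiniteLength

section Gorenstein

open Abelian

variable {R : Type u} [Ring R] {d : ℕ} {Q : CochainComplex (ModuleCat.{u} R) ℤ}

namespace IsAcyclicProjective

variable (hQ : IsAcyclicProjective Q) (hR : HasInjectiveDimensionLT (ModuleCat.of R R) d)
include hQ hR

lemma subsingleton_ext_one_of_isSyzygy {U V : ModuleCat.{u} R} (h : IsSyzygy U V) {i j : ℤ}
    (hij : i + 1 = j) (hU : Subsingleton (Ext.{u} (Q.cycles i) U 1)) :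
    Subsingleton (Ext.{u} (Q.cycles j) V 1) := by
  obtain ⟨m, f, g, w, hS⟩ := h
  exact hQ.subsingleton_ext_one_cycles_of_shortExact hS (hasInjectiveDimensionLT_finFree (d := d) m)
    hij hU

variable [IsNoetherianRing R]

/-- Syzygies of order at least `d` are Cohen–Macaulay. -/
lemma eventually_subsingleton_ext_one_of_finite
    (hCM : ∀ V : ModuleCat.{u} R, IsCohenMacaulay V →
      ∀ᶠ i in Filter.atBot, Subsingleton (Ext.{u} (Q.cycles i) V 1))
    (V : ModuleCat.{u} R) [Module.Finite R V] :
    ∀ᶠ i in Filter.atBot, Subsingleton (Ext.{u} (Q.cycles i) V 1) := by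
  suffices ∀ (n : ℕ) (V : ModuleCat.{u} R), Module.Finite R V →
      (∀ k : ℕ, Subsingleton (Ext.{u} V (ModuleCat.of R R) (n + k + 1))) →
      ∀ᶠ i in Filter.atBot, Subsingleton (Ext.{u} (Q.cycles i) V 1) from
    this d V ‹_› fun k ↦ HasInjectiveDimensionLT.subsingleton _ d _ (by lia) _
  intro n
  induction n with
  | zero => exact fun V hV hext ↦ hCM V ⟨hV, by simpa using hext⟩
  | succ n ih =>
    intro V hV hext
    obtain ⟨U, hU, hUV⟩ := exists_isSyzygy_of_finite V
    have hextU (k : ℕ) : Subsingleton (Ext.{u} U (ModuleCat.of R R) (n + k + 1)) := by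
      obtain ⟨m, f, g, w, hS⟩ := hUV
      exact subsingleton_ext_X₁_left hS _ _ (subsingleton_ext_finFree_left m _ _)
        (by convert hext k using 2; lia)
    have htendsto : Filter.Tendsto (fun i : ℤ ↦ i - 1) Filter.atBot Filter.atBot :=
      Filter.tendsto_atBot_add_const_right _ (-1) Filter.tendsto_id
    filter_upwards [htendsto.eventually (ih U hU hextU)] with i hi
    exact hQ.subsingleton_ext_one_of_isSyzygy hR hUV (sub_add_cancel i 1) hi

lemma forall_subsingleton_ext_one_of_le {i₀ : ℤ}
    (h : ∀ V : ModuleCat.{u} R, Module.Finite R V → Subsingleton (Ext.{u} (Q.cycles i₀) V 1))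
    {i : ℤ} (hi : i₀ ≤ i) :
    ∀ V : ModuleCat.{u} R, Module.Finite R V → Subsingleton (Ext.{u} (Q.cycles i) V 1) := by
  induction i, hi using Int.leInduction with
  | base => exact h
  | succ i _ ih =>
    intro V _
    obtain ⟨U, hU, hUV⟩ := exists_isSyzygy_of_finite V
    exact hQ.subsingleton_ext_one_of_isSyzygy hR hUV rfl (ih U hU)

omit [IsNoetherianRing R] in
lemma subsingleton_ext_one_cycles_of_finite [IsArtinianRing R]
    (hCM : ∀ V : ModuleCat.{u} R, IsCohenMacaulay V →
      ∀ᶠ i in Filter.atBot, Subsingleton (Ext.{u} (Q.cycles i) V 1))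
    (i : ℤ) : ∀ V : ModuleCat.{u} R, Module.Finite R V →
      Subsingleton (Ext.{u} (Q.cycles i) V 1) := by
  obtain ⟨i₀, hi₀⟩ := Filter.eventually_atBot.1 <| hQ.eventually_subsingleton_ext_one_of_finite hR
    hCM (ModuleCat.of R (R ⧸ Ring.jacobson R))
  exact hQ.forall_subsingleton_ext_one_of_le hR
    (fun V _ ↦ subsingleton_ext_of_quotient_jacobson (hi₀ _ (min_le_right i i₀)) V)
    (min_le_left i i₀)

end IsAcyclicProjective

end Gorenstein

section SiltingObjects

open Abelian

lemma exists_hasInjectiveDimensionLT {R : Type} [Ring R] (h : HasFiniteSelfInjDim R) :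
    ∃ d, HasInjectiveDimensionLT (ModuleCat.of R R) d := by
  obtain ⟨n, I, φ, hI, hzero, _⟩ := h
  exact ⟨n + 1, hasInjectiveDimensionLT_of_quasiIso_single φ hI hzero⟩

lemma IsCohenMacaulay.eventually_subsingleton_ext_one_cycles {Λ : Type} [Ring Λ]
    [IsNoetherianRing Λ] [IsNoetherianRing Λᵐᵒᵖ] {d d' : ℕ}
    (hR : HasInjectiveDimensionLT (ModuleCat.of Λᵐᵒᵖ Λᵐᵒᵖ) d)
    (hΛ : HasInjectiveDimensionLT (ModuleCat.of Λ Λᵐᵒᵖ) d')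
    {Q : CochainComplex (ModuleCat.{0} Λᵐᵒᵖ) ℤ} (hQ : IsAcyclicProjective Q)
    (h : ∀ Y, IsCMStableObj Λᵐᵒᵖ Y → EventuallyOrthogonal (ofComplex Λᵐᵒᵖ Q) Y)
    {V : ModuleCat.{0} Λᵐᵒᵖ} (hV : IsCohenMacaulay V) :
    ∀ᶠ i in Filter.atBot, Subsingleton (Ext.{0} (Q.cycles i) V 1) := by
  obtain ⟨Y, hYfree, hY, ⟨e⟩⟩ := hV.exists_acyclic hΛ
  have hYstable : IsCMStableObj Λᵐᵒᵖ (ofComplex Λᵐᵒᵖ Y) := by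
    refine ⟨Y, fun i ↦ ?_, hY, ⟨Iso.refl _⟩⟩
    obtain ⟨m, ⟨e⟩⟩ := hYfree i
    exact ⟨Projective.of_iso e.symm inferInstance, Module.Finite.equiv e.symm.toLinearEquiv⟩
  have hext (i j : ℤ) : Subsingleton (Ext.{0} (Q.cycles i) (Y.X j) 1) := by
    obtain ⟨m, ⟨e⟩⟩ := hYfree j
    have := hasInjectiveDimensionLT_finFree (R := Λᵐᵒᵖ) (d := d) m
    have hinj := hasInjectiveDimensionLT_of_iso e.symm d
    exact hQ.subsingleton_ext_cycles hinj i 0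
  filter_upwards [hQ.eventually_subsingleton_ext_one_cycles hext hY (h _ hYstable) 0] with i hi
  exact subsingleton_ext_of_retract_right _ (Retract.ofIso e.symm) 1 hi

end SiltingObjects

theorem stable_CM_category_has_no_nonzero_silting_general (Λ : Type) [Ring Λ] [IsNoetherianRing Λ]
    [IsArtinianRing Λᵐᵒᵖ] (hright : HasFiniteSelfInjDim Λᵐᵒᵖ) (hleft : HasFiniteSelfInjDim Λ)
    (X : HtpyCat Λᵐᵒᵖ) (hX : IsSiltingFor (IsCMStableObj Λᵐᵒᵖ) X) : IsZero X := by
  obtain ⟨⟨Q, hQP, hQexact, ⟨e⟩⟩, hXpresilting, hXgen⟩ := hX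
  have hQ : IsAcyclicProjective Q := ⟨fun i ↦ (hQP i).1, hQexact⟩
  obtain ⟨d, hd⟩ := exists_hasInjectiveDimensionLT hright
  obtain ⟨d', hd'⟩ := exists_hasInjectiveDimensionLT hleft
  have hΛ : HasInjectiveDimensionLT (ModuleCat.of Λ Λᵐᵒᵖ) d' :=
    hasInjectiveDimensionLT_of_iso (MulOpposite.opLinearEquiv Λ).toModuleIso d'
  have horth (Y) (hY : IsCMStableObj Λᵐᵒᵖ Y) : EventuallyOrthogonal (ofComplex Λᵐᵒᵖ Q) Y := by
    obtain ⟨N, hN⟩ := hXpresilting.eventuallyOrthogonal_of_inThick (hXgen Y hY)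
    exact ⟨N, fun n hn f ↦ by rw [← cancel_epi e.hom, hN n hn (e.hom ≫ f), comp_zero]⟩
  have hext := hQ.subsingleton_ext_one_cycles_of_finite hd fun V hV ↦
    hV.eventually_subsingleton_ext_one_cycles hd hΛ hQ horth
  have hfin (i : ℤ) : Module.Finite Λᵐᵒᵖ (Q.cycles i) :=
    have := (hQP i).2
    .of_injective (Q.iCycles i).hom ((ModuleCat.mono_iff_injective _).1 inferInstance)
  exact (hQ.isZero_quotient fun i j _ ↦ hext j _ (hfin i)).of_iso e

/-- Corollary 2.3 of the paper.  Let `Λ` be an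
Iwanaga–Gorenstein finite-dimensional algebra over an algebraically closed
field `K`, i.e. `Λ` has finite self-injective dimension as a right and as a
left module.  Then the stable category of Cohen–Macaulay `Λ`-modules (modelled,
following Buchweitz, by the homotopy category of acyclic complexes of finitely
generated projective right `Λ`-modules) admits no non-zero silting object. -/
theorem stable_CM_category_has_no_nonzero_silting
    (K Λ : Type) [Field K] [IsAlgClosed K] [Ring Λ] [Algebra K Λ] [FiniteDimensional K Λ]
    (hright : HasFiniteSelfInjDim Λᵐᵒᵖ) (hleft : HasFiniteSelfInjDim Λ) :
    ∀ X : HtpyCat Λᵐᵒᵖ, IsSiltingFor (IsCMStableObj Λᵐᵒᵖ) X → IsZero X := by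
  have : Module.Finite K Λᵐᵒᵖ := .equiv (MulOpposite.opLinearEquiv K (M := Λ))
  have : IsNoetherianRing Λ := isNoetherian_of_tower K inferInstance
  have : IsArtinianRing Λᵐᵒᵖ := isArtinian_of_tower K inferInstance
  exact stable_CM_category_has_no_nonzero_silting_general Λ hright hleft

end PaperSilting
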